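/- Let Ω ⊆ ℝⁿ be bounded open convex and (u_k) a sequence of convex functions on Ω converging pointwise to a convex function u. Then the Monge-Ampère measures MA(u_k) converge weakly to MA(u), i.e., ∫ f dMA(u_k) → ∫ f dMA(u) for every continuous function f with compact support in Ω. -/

import Mathlib

open scoped RealInnerProductSpace
open MeasureTheory Filter

noncomputable section

/-- The gradient image (subdifferential) of `h` at `x₀` relative to the domain `Ω`. -/
def gradientImage {n : ℕ} (Ω : Set (EuclideanSpace ℝ (Fin n)))
    (h : EuclideanSpace ℝ (Fin n) → ℝ) (x₀ : EuclideanSpace ℝ (Fin n)) :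
    Set (EuclideanSpace ℝ (Fin n)) :=
  {p | ∀ x ∈ Ω, h x₀ + ⟪x - x₀, p⟫ ≤ h x}

/-!
A pointwise convergent sequence of convex functions is locally equi-Lipschitz, so `u k` converges
to the limit `v` continuously: `u k (y k) → v x` whenever `y k → x`. A limit of subgradients of the
`u k` is therefore a subgradient of `v`, and all subgradients over a compact set stay in a fixed
ball; hence `∇(u k)(K)` eventually lies in any neighbourhood of `∇v(K)`, which gives
`limsup MA(u k)(K) ≤ MA(v)(K)` for compact `K`.

For the lower bound on an open set, let `V` be open with compact closure and let `p` be a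
subgradient of `v` at a point of `V` but at no point of its frontier. Then `v - ⟪·, p⟫` is strictly
larger on the frontier than at that point, so for large `k` the function `u k - ⟪·, p⟫` attains its
minimum over the closure of `V` inside `V`, and `p ∈ ∇(u k)(V)`. The `p` that are subgradients both
on a compact `K ⊆ V` and on the frontier form a null set because `MA(v)` is additive. The two
bounds give convergence of the integrals by the layer cake formula.
-/

section Vague

open Set
open scoped Topology ENNReal

variable {X : Type*} [MeasurableSpace X]

lemma measure_setOf_eventually_mem_le_liminf (μ : Measure X) (s : ℕ → Set X) :
    μ {x | ∀ᶠ k in atTop, x ∈ s k} ≤ liminf (fun k => μ (s k)) atTop := by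
  have hunion : {x | ∀ᶠ k in atTop, x ∈ s k} = ⋃ i, {x | ∀ k ≥ i, x ∈ s k} := by
    ext x
    simp only [eventually_atTop, mem_ofPred_eq, mem_iUnion]
  have hmono : Monotone fun i => {x | ∀ k ≥ i, x ∈ s k} :=
    fun i j hij x hx k hk => hx k (hij.trans hk)
  rw [hunion, hmono.measure_iUnion]
  refine iSup_le fun i => le_liminf_of_le (by isBoundedDefault) ?_
  filter_upwards [eventually_ge_atTop i] with k hk using measure_mono fun x hx => hx k hk

variable [TopologicalSpace X] [OpensMeasurableSpace X] {Ω : Set X} {μ : ℕ → Measure X}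
  {ν : Measure X} {f : X → ℝ}

lemma integrable_of_measure_tsupport_lt_top (hf : Continuous f) (hfc : HasCompactSupport f)
    (hν : ν (tsupport f) < ∞) : Integrable f ν := by
  rw [← integrableOn_iff_integrable_of_support_subset (subset_tsupport f)]
  exact hf.continuousOn.integrableOn_of_subset_isCompact hfc
    (isClosed_tsupport f).measurableSet Subset.rfl hν.ne

lemma lintegral_le_liminf_lintegral_of_forall_isOpen (hΩ : IsOpen Ω)
    (hG : ∀ G ⊆ Ω, IsOpen G → ν G ≤ liminf (fun k => μ k G) atTop)
    (hf : Continuous f) (hfΩ : tsupport f ⊆ Ω) (hf0 : 0 ≤ f) :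
    ∫⁻ x, ENNReal.ofReal (f x) ∂ν ≤
      liminf (fun k => ∫⁻ x, ENNReal.ofReal (f x) ∂μ k) atTop := by
  have hsupp : Function.support (fun x => ENNReal.ofReal (f x)) ⊆ Ω := fun x hx =>
    hfΩ (subset_tsupport f fun h0 => hx (by simp only [h0, ENNReal.ofReal_zero]))
  have hrestrict : ∀ m : Measure X,
      ∫⁻ x, ENNReal.ofReal (f x) ∂m = ∫⁻ x in Ω, ENNReal.ofReal (f x) ∂m := fun m =>
    (setLIntegral_eq_of_support_subset hsupp).symm
  rw [hrestrict ν, funext fun k => hrestrict (μ k)]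
  refine lintegral_le_liminf_lintegral_of_forall_isOpen_measure_le_liminf_measure hf hf0
    fun G hGo => ?_
  simp_rw [Measure.restrict_apply hGo.measurableSet]
  exact hG _ inter_subset_right (hGo.inter hΩ)

lemma limsup_lintegral_le_of_forall_isCompact (hfin : ν (tsupport f) < ∞)
    (hK : ∀ K ⊆ tsupport f, IsCompact K → limsup (fun k => μ k K) atTop ≤ ν K)
    (hf : Continuous f) (hfc : HasCompactSupport f) (hf0 : 0 ≤ f) :
    limsup (fun k => ∫⁻ x, ENNReal.ofReal (f x) ∂μ k) atTop ≤
      ∫⁻ x, ENNReal.ofReal (f x) ∂ν := by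
  have hlevel : ∀ t > 0, {x | t ≤ f x} ⊆ tsupport f := fun t ht x hx =>
    subset_tsupport f (ht.trans_le hx).ne'
  have hlevel_compact : ∀ t > 0, IsCompact {x | t ≤ f x} := fun t ht =>
    hfc.of_isClosed_subset (isClosed_le continuous_const hf) (hlevel t ht)
  obtain ⟨C, hνC, hC⟩ := exists_between hfin
  obtain ⟨N, hN⟩ : ∃ N, ∀ k ≥ N, μ k (tsupport f) < C :=
    eventually_atTop.1 (eventually_lt_of_limsup_lt ((hK _ Subset.rfl hfc).trans_lt hνC))
  obtain ⟨M, hM⟩ := hf.bounded_above_of_compact_support hfc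
  have hdom : ∀ k, ∀ t > 0, μ (k + N) {x | t ≤ f x} ≤ (Ioc 0 M).indicator (fun _ => C) t := by
    intro k t ht
    by_cases htM : t ≤ M
    · rw [indicator_of_mem (mem_Ioc.2 ⟨ht, htM⟩)]
      exact (measure_mono (hlevel t ht)).trans (hN _ le_add_self).le
    · have hempty : {x | t ≤ f x} = ∅ := eq_empty_of_forall_notMem fun x hx =>
        htM (le_trans hx ((le_abs_self _).trans (hM x)))
      simp only [hempty, measure_empty, zero_le]
  simp_rw [fun m : Measure X => lintegral_eq_lintegral_meas_le m (.of_forall hf0)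
    hf.aemeasurable]
  rw [← limsup_nat_add _ N]
  refine (limsup_lintegral_le ((Ioc 0 M).indicator fun _ => C) (fun k => ?_) (fun k => ?_)
    ?_).trans (setLIntegral_mono' measurableSet_Ioi fun t ht => ?_)
  · exact Antitone.measurable fun s t hst => measure_mono fun x hx => hst.trans hx
  · exact (ae_restrict_iff' measurableSet_Ioi).2 (.of_forall (hdom k))
  · refine ((setLIntegral_le_lintegral _ _).trans_lt ?_).ne
    rw [lintegral_indicator_const measurableSet_Ioc]
    exact ENNReal.mul_lt_top hC (by simp only [Real.volume_Ioc, ENNReal.ofReal_lt_top])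
  · rw [limsup_nat_add (fun k => μ k {x | t ≤ f x}) N]
    exact hK _ (hlevel t ht) (hlevel_compact t ht)

lemma tendsto_lintegral_of_forall_isCompact_of_forall_isOpen (hΩ : IsOpen Ω)
    (hfin : ∀ K ⊆ Ω, IsCompact K → ν K < ∞)
    (hK : ∀ K ⊆ Ω, IsCompact K → limsup (fun k => μ k K) atTop ≤ ν K)
    (hG : ∀ G ⊆ Ω, IsOpen G → ν G ≤ liminf (fun k => μ k G) atTop)
    (hf : Continuous f) (hfc : HasCompactSupport f) (hfΩ : tsupport f ⊆ Ω) :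
    Tendsto (fun k => ∫⁻ x, ENNReal.ofReal (f x) ∂μ k) atTop
      (𝓝 (∫⁻ x, ENNReal.ofReal (f x) ∂ν)) := by
  have hpos : ∀ x, ENNReal.ofReal (f x) = ENNReal.ofReal (max (f x) 0) := fun x => by
    rw [ENNReal.ofReal_max, ENNReal.ofReal_zero, max_eq_left zero_le]
  have hgc : HasCompactSupport fun x => max (f x) 0 :=
    hfc.comp_left (g := fun t => max t 0) (max_self 0)
  have hgf : tsupport (fun x => max (f x) 0) ⊆ tsupport f :=
    closure_mono (Function.support_comp_subset (g := fun t : ℝ => max t 0) (max_self 0) f)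
  have hgΩ := hgf.trans hfΩ
  have hg : Continuous fun x => max (f x) 0 := hf.max continuous_const
  have hg0 : 0 ≤ fun x => max (f x) 0 := fun x => le_max_right _ _
  simp_rw [hpos]
  exact tendsto_of_le_liminf_of_limsup_le
    (lintegral_le_liminf_lintegral_of_forall_isOpen hΩ hG hg hgΩ hg0)
    (limsup_lintegral_le_of_forall_isCompact (hfin _ hgΩ hgc)
      (fun K hKf => hK K (hKf.trans hgΩ)) hg hgc hg0)

theorem tendsto_integral_of_forall_isCompact_of_forall_isOpen (hΩ : IsOpen Ω)
    (hfin : ∀ K ⊆ Ω, IsCompact K → ν K < ∞)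
    (hK : ∀ K ⊆ Ω, IsCompact K → limsup (fun k => μ k K) atTop ≤ ν K)
    (hG : ∀ G ⊆ Ω, IsOpen G → ν G ≤ liminf (fun k => μ k G) atTop)
    (hf : Continuous f) (hfc : HasCompactSupport f) (hfΩ : tsupport f ⊆ Ω) :
    Tendsto (fun k => ∫ x, f x ∂μ k) atTop (𝓝 (∫ x, f x ∂ν)) := by
  have hνf : Integrable f ν := integrable_of_measure_tsupport_lt_top hf hfc (hfin _ hfΩ hfc)
  have hμf : ∀ᶠ k in atTop, Integrable f (μ k) :=
    (eventually_lt_of_limsup_lt ((hK _ hfΩ hfc).trans_lt (hfin _ hfΩ hfc))).mono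
      fun k => integrable_of_measure_tsupport_lt_top hf hfc
  have hpart : ∀ g : X → ℝ, Continuous g → HasCompactSupport g → tsupport g ⊆ Ω →
      Integrable g ν → Tendsto (fun k => (∫⁻ x, ENNReal.ofReal (g x) ∂μ k).toReal) atTop
        (𝓝 (∫⁻ x, ENNReal.ofReal (g x) ∂ν).toReal) := fun g hg hgc hgΩ hgν =>
    (ENNReal.tendsto_toReal hgν.lintegral_lt_top.ne).comp
      (tendsto_lintegral_of_forall_isCompact_of_forall_isOpen hΩ hfin hK hG hg hgc hgΩ)
  have hneg : tsupport (fun x => -f x) = tsupport f := tsupport_neg f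
  rw [integral_eq_lintegral_pos_part_sub_lintegral_neg_part hνf]
  refine Tendsto.congr' (hμf.mono fun k hk =>
    (integral_eq_lintegral_pos_part_sub_lintegral_neg_part hk).symm) ?_
  exact (hpart f hf hfc hfΩ hνf).sub
    (hpart (fun x => -f x) hf.neg hfc.neg (hneg.trans_subset hfΩ) hνf.neg)

end Vague

section Convex

open Set
open scoped Topology NNReal

variable {E : Type*} [NormedAddCommGroup E] [NormedSpace ℝ E] {Ω : Set E} {ι : Type*}
  {u : ι → E → ℝ}

lemma convexOn_ciSup [Nonempty ι] (hu : ∀ i, ConvexOn ℝ Ω (u i))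
    (hbdd : ∀ x ∈ Ω, BddAbove (range fun i => u i x)) :
    ConvexOn ℝ Ω (fun x => ⨆ i, u i x) := by
  refine ⟨(hu (Classical.arbitrary ι)).1, fun x hx y hy a b ha hb hab => ciSup_le fun i => ?_⟩
  calc u i (a • x + b • y) ≤ a • u i x + b • u i y := (hu i).2 hx hy ha hb hab
    _ ≤ a • (⨆ i, u i x) + b • ⨆ i, u i y := by
      gcongr
      exacts [le_ciSup (hbdd x hx) i, le_ciSup (hbdd y hy) i]

lemma convexOn_of_tendsto {l : Filter ι} [l.NeBot] {v : E → ℝ} (hu : ∀ i, ConvexOn ℝ Ω (u i))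
    (hlim : ∀ x ∈ Ω, Tendsto (fun i => u i x) l (𝓝 (v x))) : ConvexOn ℝ Ω v := by
  obtain ⟨i₀, -⟩ := l.nonempty_of_mem univ_mem
  have hΩ : Convex ℝ Ω := (hu i₀).1
  exact ⟨hΩ, fun x hx y hy a b ha hb hab =>
    le_of_tendsto_of_tendsto' (hlim _ (hΩ hx hy ha hb hab))
      (((hlim x hx).const_smul a).add ((hlim y hy).const_smul b))
      fun i => (hu i).2 hx hy ha hb hab⟩

variable [FiniteDimensional ℝ E]

lemma exists_eventually_forall_abs_le_of_convexOn (hΩ : IsOpen Ω)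
    (hu : ∀ i, ConvexOn ℝ Ω (u i))
    (hbdd : ∀ x ∈ Ω, Bornology.IsBounded (range fun i => u i x)) {x₀ : E} (hx₀ : x₀ ∈ Ω) :
    ∃ M, ∀ᶠ x in 𝓝 x₀, ∀ i, |u i x| ≤ M := by
  rcases isEmpty_or_nonempty ι with _ | _
  · exact ⟨0, .of_forall fun x => isEmptyElim⟩
  have habove : ∀ x ∈ Ω, BddAbove (range fun i => u i x) := fun x hx => (hbdd x hx).bddAbove
  obtain ⟨m, hm⟩ := (hbdd x₀ hx₀).bddBelow
  have hsup : ContinuousAt (fun x => ⨆ i, u i x) x₀ :=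
    ((convexOn_ciSup hu habove).continuousOn hΩ).continuousAt (hΩ.mem_nhds hx₀)
  set A : ℝ := (⨆ i, u i x₀) + 1
  have hupper : ∀ᶠ x in 𝓝 x₀, x ∈ Ω ∧ ∀ i, u i x ≤ A := by
    filter_upwards [hΩ.mem_nhds hx₀, hsup.eventually (gt_mem_nhds (lt_add_one _))] with x hx hxA
    exact ⟨hx, fun i => (le_ciSup (habove x hx) i).trans hxA.le⟩
  have hreflect : Tendsto (fun x => (2 : ℝ) • x₀ - x) (𝓝 x₀) (𝓝 x₀) :=
    Continuous.tendsto' (by fun_prop) _ _ (by rw [two_smul, add_sub_cancel_right])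
  refine ⟨max A (A - 2 * m), ?_⟩
  filter_upwards [hupper, hreflect.eventually hupper] with x ⟨hx, hxA⟩ ⟨hx', hxA'⟩ i
  have hmid : (1 / 2 : ℝ) • x + (1 / 2 : ℝ) • ((2 : ℝ) • x₀ - x) = x₀ := by module
  have hle : u i x₀ ≤ 1 / 2 * u i x + 1 / 2 * u i ((2 : ℝ) • x₀ - x) := by
    simpa only [hmid, smul_eq_mul] using
      (hu i).2 hx hx' one_half_pos.le one_half_pos.le (add_halves 1)
  have hmi : m ≤ u i x₀ := hm (mem_range_self i)
  have hlower : -(A - 2 * m) ≤ u i x := by linarith [hxA' i]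
  exact abs_le'.2 ⟨(hxA i).trans (le_max_left _ _), (neg_le.1 hlower).trans (le_max_right _ _)⟩

theorem exists_forall_lipschitzOnWith_of_convexOn (hΩ : IsOpen Ω)
    (hu : ∀ i, ConvexOn ℝ Ω (u i))
    (hbdd : ∀ x ∈ Ω, Bornology.IsBounded (range fun i => u i x)) {x₀ : E} (hx₀ : x₀ ∈ Ω) :
    ∃ L : ℝ≥0, ∃ s ∈ 𝓝 x₀, ∀ i, LipschitzOnWith L (u i) s := by
  obtain ⟨M, hM⟩ := exists_eventually_forall_abs_le_of_convexOn hΩ hu hbdd hx₀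
  obtain ⟨r, hr, hball⟩ := Metric.eventually_nhds_iff_ball.1 (hM.and (hΩ.mem_nhds hx₀))
  refine ⟨(2 * M / (r / 2)).toNNReal, Metric.ball x₀ (r - r / 2),
    Metric.ball_mem_nhds x₀ (by linarith), fun i => ?_⟩
  exact ((hu i).subset (fun x hx => (hball x hx).2)
    (convex_ball x₀ r)).lipschitzOnWith_of_abs_le (half_pos hr) fun x hx => (hball x hx).1 i

theorem tendsto_prod_nhds_of_convexOn {l : Filter ι} {v : E → ℝ} (hΩ : IsOpen Ω)
    (hu : ∀ i, ConvexOn ℝ Ω (u i))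
    (hbdd : ∀ x ∈ Ω, Bornology.IsBounded (range fun i => u i x)) {x : E} (hx : x ∈ Ω)
    (hlim : Tendsto (fun i => u i x) l (𝓝 (v x))) :
    Tendsto (fun q : ι × E => u q.1 q.2) (l ×ˢ 𝓝 x) (𝓝 (v x)) := by
  obtain ⟨L, s, hs, hL⟩ := exists_forall_lipschitzOnWith_of_convexOn hΩ hu hbdd hx
  have hdist : Tendsto (fun q : ι × E => (L : ℝ) * dist q.2 x) (l ×ˢ 𝓝 x) (𝓝 0) := by
    simpa only [mul_zero] using
      (tendsto_iff_dist_tendsto_zero.1 (tendsto_snd (f := l))).const_mul (L : ℝ)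
  have hdiff : Tendsto (fun q : ι × E => u q.1 q.2 - u q.1 x) (l ×ˢ 𝓝 x) (𝓝 0) := by
    refine squeeze_zero_norm' ?_ hdist
    filter_upwards [tendsto_snd.eventually_mem hs] with q hq
    exact (hL q.1).dist_le_mul _ hq _ (mem_of_mem_nhds hs)
  simpa only [Function.comp_apply, sub_add_cancel, zero_add] using hdiff.add (hlim.comp tendsto_fst)

end Convex

section Subdifferential

open Set
open scoped Topology NNReal

variable {n : ℕ} {Ω K V : Set (EuclideanSpace ℝ (Fin n))}

/-- The image `∇h(E)` of a set `E` under the subdifferential of `h`, the union of the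
subdifferentials `gradientImage Ω h x` over `x ∈ E`. Its volume is the Monge-Ampère mass of `E`. -/
def subdifferentialImage (Ω : Set (EuclideanSpace ℝ (Fin n))) (h : EuclideanSpace ℝ (Fin n) → ℝ)
    (E : Set (EuclideanSpace ℝ (Fin n))) : Set (EuclideanSpace ℝ (Fin n)) :=
  ⋃ x ∈ E, gradientImage Ω h x

variable {h v : EuclideanSpace ℝ (Fin n) → ℝ} {u : ℕ → EuclideanSpace ℝ (Fin n) → ℝ}
  {x p : EuclideanSpace ℝ (Fin n)}

lemma mem_subdifferentialImage :
    p ∈ subdifferentialImage Ω h K ↔ ∃ x ∈ K, p ∈ gradientImage Ω h x := by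
  simp only [subdifferentialImage, mem_iUnion, exists_prop]

lemma subdifferentialImage_union :
    subdifferentialImage Ω h (K ∪ V) =
      subdifferentialImage Ω h K ∪ subdifferentialImage Ω h V :=
  biUnion_union _ _ _

lemma subdifferentialImage_mono (hKV : K ⊆ V) :
    subdifferentialImage Ω h K ⊆ subdifferentialImage Ω h V :=
  biUnion_subset_biUnion_left hKV

lemma mem_gradientImage_iff_isMinOn :
    p ∈ gradientImage Ω h x ↔ IsMinOn (fun z => h z - ⟪z, p⟫) Ω x := by
  refine forall₂_congr fun z _ => ?_
  simp only [mem_ofPred_eq, inner_sub_left]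
  constructor <;> intro <;> linarith

lemma mem_gradientImage_of_isLocalMin (hh : ConvexOn ℝ Ω h) (hx : x ∈ Ω)
    (hmin : IsLocalMin (fun z => h z - ⟪z, p⟫) x) : p ∈ gradientImage Ω h x := by
  have hlin : ConcaveOn ℝ Ω fun z => ⟪z, p⟫ :=
    ((innerₗ (EuclideanSpace ℝ (Fin n))).flip p).concaveOn hh.1
  exact mem_gradientImage_iff_isMinOn.2
    (.of_isLocalMinOn_of_convexOn hx (hmin.on Ω) (hh.sub hlin))

lemma norm_le_of_mem_gradientImage {L : ℝ≥0} {s : Set (EuclideanSpace ℝ (Fin n))}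
    (hL : LipschitzOnWith L h s) (hs : s ∈ 𝓝 x) (hsΩ : s ⊆ Ω) (hp : p ∈ gradientImage Ω h x) :
    ‖p‖ ≤ L := by
  have hone_sided : ∀ z, x + z ∈ s → ⟪p, z⟫ ≤ L * ‖z‖ := fun z hz => by
    have hsub := hp (x + z) (hsΩ hz)
    have hlip := hL.dist_le_mul _ hz _ (mem_of_mem_nhds hs)
    rw [add_sub_cancel_left, real_inner_comm] at hsub
    rw [dist_self_add_left, Real.dist_eq] at hlip
    linarith [le_abs_self (h (x + z) - h x)]
  have hplus : Tendsto (fun z => x + z) (𝓝 0) (𝓝 x) :=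
    Continuous.tendsto' (by fun_prop) _ _ (add_zero x)
  have hminus : Tendsto (fun z => x + -z) (𝓝 0) (𝓝 x) :=
    Continuous.tendsto' (by fun_prop) _ _ (by rw [neg_zero, add_zero])
  rw [← innerSL_apply_norm (𝕜 := ℝ) p]
  refine ContinuousLinearMap.opNorm_le_of_nhds_zero L.2 ?_
  filter_upwards [hplus hs, hminus hs] with z hz hz'
  rw [innerSL_apply_apply, Real.norm_eq_abs, abs_le']
  refine ⟨hone_sided z hz, ?_⟩
  simpa only [inner_neg_right, norm_neg] using hone_sided (-z) hz'

theorem isBounded_iUnion_subdifferentialImage {ι : Type*}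
    {u : ι → EuclideanSpace ℝ (Fin n) → ℝ} (hΩ : IsOpen Ω) (hu : ∀ i, ConvexOn ℝ Ω (u i))
    (hbdd : ∀ x ∈ Ω, Bornology.IsBounded (range fun i => u i x)) (hK : IsCompact K)
    (hKΩ : K ⊆ Ω) : Bornology.IsBounded (⋃ i, subdifferentialImage Ω (u i) K) := by
  refine hK.induction_on
    (p := fun S => Bornology.IsBounded (⋃ i, subdifferentialImage Ω (u i) S)) ?_ ?_ ?_ ?_
  · simp only [subdifferentialImage, biUnion_empty, iUnion_empty, Bornology.isBounded_empty]
  · exact fun S T hST hT => hT.subset (iUnion_mono fun i => subdifferentialImage_mono hST)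
  · intro S T hS hT
    simp only [subdifferentialImage_union, iUnion_union_distrib]
    exact hS.union hT
  · intro x hx
    obtain ⟨L, s, hs, hL⟩ := exists_forall_lipschitzOnWith_of_convexOn hΩ hu hbdd (hKΩ hx)
    have hsΩ : s ∩ Ω ∈ 𝓝 x := inter_mem hs (hΩ.mem_nhds (hKΩ hx))
    refine ⟨interior (s ∩ Ω), mem_nhdsWithin_of_mem_nhds (interior_mem_nhds.2 hsΩ),
      isBounded_iff_forall_norm_le.2 ⟨L, fun p hp => ?_⟩⟩
    obtain ⟨i, hpi⟩ := mem_iUnion.1 hp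
    obtain ⟨y, hy, hpy⟩ := mem_subdifferentialImage.1 hpi
    exact norm_le_of_mem_gradientImage ((hL i).mono inter_subset_left)
      (mem_interior_iff_mem_nhds.1 hy) inter_subset_right hpy

theorem isCompact_subdifferentialImage (hΩ : IsOpen Ω) (hh : ConvexOn ℝ Ω h)
    (hK : IsCompact K) (hKΩ : K ⊆ Ω) : IsCompact (subdifferentialImage Ω h K) := by
  have hbdd : Bornology.IsBounded (⋃ _ : Unit, subdifferentialImage Ω h K) :=
    isBounded_iUnion_subdifferentialImage hΩ (fun _ => hh)
      (fun x _ => (finite_range fun _ => h x).isBounded) hK hKΩ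
  obtain ⟨R, hR⟩ := (Metric.isBounded_iff_subset_closedBall 0).1 hbdd
  rw [iUnion_const] at hR
  set B := K ×ˢ Metric.closedBall (0 : EuclideanSpace ℝ (Fin n)) R
  have hB : IsCompact B := hK.prod (isCompact_closedBall _ _)
  have hcont : ContinuousOn h K := (hh.continuousOn hΩ).mono hKΩ
  have hgraph : IsClosed (⋂ z ∈ Ω, {q ∈ B | h q.1 + ⟪z - q.1, q.2⟫ ≤ h z}) :=
    isClosed_biInter fun z _ => hB.isClosed.isClosed_le
      ((hcont.comp continuousOn_fst fun q hq => hq.1).add (by fun_prop)) continuousOn_const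
  convert (hB.inter_right hgraph).image continuous_snd using 1
  ext p
  simp only [mem_subdifferentialImage, mem_image, mem_inter_iff, mem_iInter₂, Prod.exists,
    exists_eq_right]
  refine exists_congr fun x => ⟨fun ⟨hx, hp⟩ => ?_, fun ⟨hxp, hp⟩ => ?_⟩
  · have hxp : (x, p) ∈ B := ⟨hx, hR (mem_subdifferentialImage.2 ⟨x, hx, hp⟩)⟩
    exact ⟨hxp, fun z hz => ⟨hxp, hp z hz⟩⟩
  · exact ⟨hxp.1, fun z hz => (hp z hz).2⟩

lemma eventually_notMem_gradientImage (hΩ : IsOpen Ω) (hu : ∀ k, ConvexOn ℝ Ω (u k))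
    (hlim : ∀ x ∈ Ω, Tendsto (fun k => u k x) atTop (𝓝 (v x))) (hx : x ∈ Ω)
    (hp : p ∉ gradientImage Ω v x) :
    ∀ᶠ q : ℕ × _ × _ in atTop ×ˢ 𝓝 (x, p), q.2.2 ∉ gradientImage Ω (u q.1) q.2.1 := by
  obtain ⟨z, hz, hlt⟩ : ∃ z ∈ Ω, v z < v x + ⟪z - x, p⟫ := by
    simpa only [gradientImage, mem_ofPred_eq, not_forall, not_le, exists_prop] using hp
  rw [nhds_prod_eq]
  have hbase := tendsto_prod_nhds_of_convexOn hΩ hu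
    (fun y hy => Metric.isBounded_range_of_tendsto _ (hlim y hy)) hx (hlim x hx)
  have hux : Tendsto (fun q : ℕ × _ × EuclideanSpace ℝ (Fin n) => u q.1 q.2.1)
      (atTop ×ˢ (𝓝 x ×ˢ 𝓝 p)) (𝓝 (v x)) :=
    hbase.comp (tendsto_fst.prodMk (tendsto_fst.comp tendsto_snd))
  have hy : Tendsto (fun q : ℕ × _ × EuclideanSpace ℝ (Fin n) => q.2.1)
      (atTop ×ˢ (𝓝 x ×ˢ 𝓝 p)) (𝓝 x) := tendsto_fst.comp tendsto_snd
  have hq : Tendsto (fun q : ℕ × EuclideanSpace ℝ (Fin n) × _ => q.2.2)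
      (atTop ×ˢ (𝓝 x ×ˢ 𝓝 p)) (𝓝 p) := tendsto_snd.comp tendsto_snd
  filter_upwards [((hlim z hz).comp tendsto_fst).eventually_lt
    (hux.add ((tendsto_const_nhds.sub hy).inner hq)) hlt] with q hlt' hmem
  exact (hmem z hz).not_gt hlt'

theorem eventually_subdifferentialImage_subset (hΩ : IsOpen Ω) (hu : ∀ k, ConvexOn ℝ Ω (u k))
    (hlim : ∀ x ∈ Ω, Tendsto (fun k => u k x) atTop (𝓝 (v x))) (hK : IsCompact K)
    (hKΩ : K ⊆ Ω) (hV : IsOpen V) (hKV : subdifferentialImage Ω v K ⊆ V) :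
    ∀ᶠ k in atTop, subdifferentialImage Ω (u k) K ⊆ V := by
  obtain ⟨R, hR⟩ := (Metric.isBounded_iff_subset_closedBall 0).1
    (isBounded_iUnion_subdifferentialImage hΩ hu
      (fun x hx => Metric.isBounded_range_of_tendsto _ (hlim x hx)) hK hKΩ)
  have hlocal : ∀ y ∈ K ×ˢ Metric.closedBall 0 R, ∀ᶠ q : ℕ × _ × _ in atTop ×ˢ 𝓝 y,
      q.2.2 ∈ gradientImage Ω (u q.1) q.2.1 → q.2.2 ∈ V := by
    rintro ⟨x, p⟩ ⟨hx, -⟩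
    by_cases hp : p ∈ gradientImage Ω v x
    · have hpV : p ∈ V := hKV (mem_subdifferentialImage.2 ⟨x, hx, hp⟩)
      have hsnd : Tendsto (fun q : ℕ × _ × _ => q.2.2) (atTop ×ˢ 𝓝 (x, p)) (𝓝 p) :=
        (continuous_snd.tendsto (x, p)).comp tendsto_snd
      exact (hsnd.eventually (hV.mem_nhds hpV)).mono fun q hq _ => hq
    · exact (eventually_notMem_gradientImage hΩ hu hlim (hKΩ hx) hp).mono
        fun q hq hmem => absurd hmem hq
  have hcompact := (hK.prod (isCompact_closedBall 0 R)).mem_prod_nhdsSet_of_forall hlocal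
  filter_upwards [Eventually.curry hcompact] with k hk p hp
  obtain ⟨x, hx, hpx⟩ := mem_subdifferentialImage.1 hp
  exact hk.self_of_nhdsSet (x, p) ⟨hx, hR (mem_iUnion.2 ⟨k, hp⟩)⟩ hpx

theorem eventually_mem_subdifferentialImage (hΩ : IsOpen Ω) (hu : ∀ k, ConvexOn ℝ Ω (u k))
    (hlim : ∀ x ∈ Ω, Tendsto (fun k => u k x) atTop (𝓝 (v x))) (hV : IsOpen V)
    (hVc : IsCompact (closure V)) (hVΩ : closure V ⊆ Ω) (hp : p ∈ subdifferentialImage Ω v V)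
    (hp' : p ∉ subdifferentialImage Ω v (frontier V)) :
    ∀ᶠ k in atTop, p ∈ subdifferentialImage Ω (u k) V := by
  obtain ⟨x₀, hx₀, hpx₀⟩ := mem_subdifferentialImage.1 hp
  have hfr : frontier V ⊆ Ω := frontier_subset_closure.trans hVΩ
  have hx₀Ω : x₀ ∈ Ω := hVΩ (subset_closure hx₀)
  have hmin : IsMinOn (fun z => v z - ⟪z, p⟫) Ω x₀ := mem_gradientImage_iff_isMinOn.1 hpx₀
  have hstrict : ∀ x ∈ frontier V, v x₀ - ⟪x₀, p⟫ < v x - ⟪x, p⟫ := by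
    refine fun x hx => lt_of_not_ge fun hle => hp' (mem_subdifferentialImage.2 ⟨x, hx, ?_⟩)
    exact mem_gradientImage_iff_isMinOn.2 fun z hz => hle.trans (hmin hz)
  have hlocal : ∀ x ∈ frontier V, ∀ᶠ q : ℕ × _ in atTop ×ˢ 𝓝 x,
      u q.1 x₀ - ⟪x₀, p⟫ < u q.1 q.2 - ⟪q.2, p⟫ := by
    intro x hx
    have hux := tendsto_prod_nhds_of_convexOn hΩ hu
      (fun y hy => Metric.isBounded_range_of_tendsto _ (hlim y hy)) (hfr hx) (hlim x (hfr hx))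
    exact (((hlim x₀ hx₀Ω).comp tendsto_fst).sub_const _).eventually_lt
      (hux.sub (tendsto_snd.inner tendsto_const_nhds)) (hstrict x hx)
  have hfrc : IsCompact (frontier V) :=
    hVc.of_isClosed_subset isClosed_frontier frontier_subset_closure
  filter_upwards [Eventually.curry (hfrc.mem_prod_nhdsSet_of_forall hlocal)] with k hk
  have hcont : ContinuousOn (fun z => u k z - ⟪z, p⟫) (closure V) :=
    (((hu k).continuousOn hΩ).mono hVΩ).sub (by fun_prop)
  obtain ⟨y, hy, hymin⟩ := hVc.exists_isMinOn ⟨x₀, subset_closure hx₀⟩ hcont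
  have hyfr : y ∉ frontier V := fun hyfr =>
    (hk.self_of_nhdsSet y hyfr).not_ge (hymin (subset_closure hx₀))
  have hyV : y ∈ V := by
    by_contra hyV
    exact hyfr (hV.frontier_eq ▸ ⟨hy, hyV⟩)
  exact mem_subdifferentialImage.2 ⟨y, hyV, mem_gradientImage_of_isLocalMin (hu k) (hVΩ hy)
    (hymin.isLocalMin (mem_of_superset (hV.mem_nhds hyV) subset_closure))⟩

end Subdifferential

section MongeAmpere

open Set
open scoped Topology ENNReal

variable {n : ℕ} {Ω : Set (EuclideanSpace ℝ (Fin n))}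

/-- `ν` is the Monge-Ampère measure of `h` on `Ω`: it gives every measurable `E ⊆ Ω` the mass
`λ(∇h(E))`. The values of `ν` outside `Ω` are left unconstrained. -/
def IsMongeAmpereMeasure (Ω : Set (EuclideanSpace ℝ (Fin n)))
    (h : EuclideanSpace ℝ (Fin n) → ℝ) (ν : Measure (EuclideanSpace ℝ (Fin n))) : Prop :=
  ∀ E, MeasurableSet E → E ⊆ Ω → ν E = volume (subdifferentialImage Ω h E)

variable {h v : EuclideanSpace ℝ (Fin n) → ℝ} {u : ℕ → EuclideanSpace ℝ (Fin n) → ℝ}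
  {μ : ℕ → Measure (EuclideanSpace ℝ (Fin n))} {ν : Measure (EuclideanSpace ℝ (Fin n))}
  {K F V G : Set (EuclideanSpace ℝ (Fin n))}

lemma IsMongeAmpereMeasure.lt_top_of_isCompact (hν : IsMongeAmpereMeasure Ω h ν)
    (hΩ : IsOpen Ω) (hh : ConvexOn ℝ Ω h) (hK : IsCompact K) (hKΩ : K ⊆ Ω) : ν K < ∞ := by
  rw [hν K hK.measurableSet hKΩ]
  exact (isCompact_subdifferentialImage hΩ hh hK hKΩ).measure_lt_top

-- Additivity of `ν` on `K ∪ F` leaves no mass for the overlap of the two images.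
lemma IsMongeAmpereMeasure.volume_subdifferentialImage_inter_eq_zero
    (hν : IsMongeAmpereMeasure Ω h ν) (hΩ : IsOpen Ω) (hh : ConvexOn ℝ Ω h)
    (hK : IsCompact K) (hKΩ : K ⊆ Ω) (hF : IsCompact F) (hFΩ : F ⊆ Ω) (hKF : Disjoint K F) :
    volume (subdifferentialImage Ω h K ∩ subdifferentialImage Ω h F) = 0 := by
  set A := subdifferentialImage Ω h K
  set B := subdifferentialImage Ω h F
  have hA : IsCompact A := isCompact_subdifferentialImage hΩ hh hK hKΩ
  have hB : IsCompact B := isCompact_subdifferentialImage hΩ hh hF hFΩ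
  have hadd : volume (A ∪ B) = volume A + volume B := by
    rw [← subdifferentialImage_union, ← hν K hK.measurableSet hKΩ, ← hν F hF.measurableSet hFΩ,
      ← hν _ (hK.union hF).measurableSet (union_subset hKΩ hFΩ)]
    exact measure_union hKF hF.measurableSet
  have hfin : volume (A ∪ B) ≠ ∞ := (hA.union hB).measure_ne_top
  refine (ENNReal.add_right_inj hfin).1 ?_
  rw [add_zero, measure_union_add_inter' hA.measurableSet, hadd]

theorem limsup_volume_subdifferentialImage_le (hΩ : IsOpen Ω) (hu : ∀ k, ConvexOn ℝ Ω (u k))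
    (hlim : ∀ x ∈ Ω, Tendsto (fun k => u k x) atTop (𝓝 (v x))) (hK : IsCompact K)
    (hKΩ : K ⊆ Ω) :
    limsup (fun k => volume (subdifferentialImage Ω (u k) K)) atTop ≤
      volume (subdifferentialImage Ω v K) := by
  refine le_of_forall_gt fun c hc => ?_
  obtain ⟨V, hKV, hV, hVc⟩ := Set.exists_isOpen_lt_of_lt _ _ hc
  refine (limsup_le_of_le (by isBoundedDefault) ?_).trans_lt hVc
  filter_upwards [eventually_subdifferentialImage_subset hΩ hu hlim hK hKΩ hV hKV] with k hk
    using measure_mono hk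

theorem IsMongeAmpereMeasure.volume_subdifferentialImage_le_liminf
    (hν : IsMongeAmpereMeasure Ω v ν) (hΩ : IsOpen Ω) (hu : ∀ k, ConvexOn ℝ Ω (u k))
    (hlim : ∀ x ∈ Ω, Tendsto (fun k => u k x) atTop (𝓝 (v x)))
    (hK : IsCompact K) (hKV : K ⊆ V) (hV : IsOpen V) (hVc : IsCompact (closure V))
    (hVΩ : closure V ⊆ Ω) :
    volume (subdifferentialImage Ω v K) ≤
      liminf (fun k => volume (subdifferentialImage Ω (u k) V)) atTop := by
  have hfr : frontier V ⊆ Ω := frontier_subset_closure.trans hVΩ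
  have hfrc : IsCompact (frontier V) :=
    hVc.of_isClosed_subset isClosed_frontier frontier_subset_closure
  have hdisj : Disjoint K (frontier V) :=
    (disjoint_frontier_iff_isOpen.2 hV).symm.mono_left hKV
  have hnull := hν.volume_subdifferentialImage_inter_eq_zero hΩ (convexOn_of_tendsto hu hlim) hK
    (hKV.trans (subset_closure.trans hVΩ)) hfrc hfr hdisj
  have hcover : subdifferentialImage Ω v K ⊆
      (subdifferentialImage Ω v K ∩ subdifferentialImage Ω v (frontier V)) ∪
        {p | ∀ᶠ k in atTop, p ∈ subdifferentialImage Ω (u k) V} := by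
    intro p hp
    by_cases hpfr : p ∈ subdifferentialImage Ω v (frontier V)
    · exact .inl ⟨hp, hpfr⟩
    · exact .inr (eventually_mem_subdifferentialImage hΩ hu hlim hV hVc hVΩ
        (subdifferentialImage_mono hKV hp) hpfr)
  calc volume (subdifferentialImage Ω v K)
      ≤ 0 + volume {p | ∀ᶠ k in atTop, p ∈ subdifferentialImage Ω (u k) V} :=
        hnull ▸ (measure_mono hcover).trans (measure_union_le _ _)
    _ ≤ liminf (fun k => volume (subdifferentialImage Ω (u k) V)) atTop := by
      rw [zero_add]
      exact measure_setOf_eventually_mem_le_liminf _ _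

theorem IsMongeAmpereMeasure.le_liminf_volume_subdifferentialImage
    (hν : IsMongeAmpereMeasure Ω v ν) (hΩ : IsOpen Ω) (hu : ∀ k, ConvexOn ℝ Ω (u k))
    (hlim : ∀ x ∈ Ω, Tendsto (fun k => u k x) atTop (𝓝 (v x))) (hG : IsOpen G) (hGΩ : G ⊆ Ω) :
    ν G ≤ liminf (fun k => volume (subdifferentialImage Ω (u k) G)) atTop := by
  refine le_of_forall_lt fun c hc => ?_
  obtain ⟨K, hKG, hK, hcK⟩ := ((Measure.InnerRegularWRT.isCompact_isClosed ν).trans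
    (Measure.InnerRegularWRT.of_pseudoMetrizableSpace ν)) hG c hc
  obtain ⟨V, hV, hKV, hVG, hVc⟩ := exists_open_between_and_isCompact_closure hK hG hKG
  calc c < ν K := hcK
    _ = volume (subdifferentialImage Ω v K) := hν K hK.measurableSet (hKG.trans hGΩ)
    _ ≤ liminf (fun k => volume (subdifferentialImage Ω (u k) V)) atTop :=
      hν.volume_subdifferentialImage_le_liminf hΩ hu hlim hK hKV hV hVc (hVG.trans hGΩ)
    _ ≤ liminf (fun k => volume (subdifferentialImage Ω (u k) G)) atTop :=
      liminf_le_liminf (.of_forall fun k =>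
        measure_mono (subdifferentialImage_mono (subset_closure.trans hVG)))

theorem mongeAmpere_weak_continuity_general (hΩ : IsOpen Ω) (hu : ∀ k, ConvexOn ℝ Ω (u k))
    (hlim : ∀ x ∈ Ω, Tendsto (fun k => u k x) atTop (𝓝 (v x)))
    (hμ : ∀ k, IsMongeAmpereMeasure Ω (u k) (μ k)) (hν : IsMongeAmpereMeasure Ω v ν)
    {f : EuclideanSpace ℝ (Fin n) → ℝ} (hf : Continuous f) (hfc : HasCompactSupport f)
    (hfΩ : tsupport f ⊆ Ω) :
    Tendsto (fun k => ∫ x, f x ∂μ k) atTop (𝓝 (∫ x, f x ∂ν)) := by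
  refine tendsto_integral_of_forall_isCompact_of_forall_isOpen hΩ (fun K hKΩ hK => ?_)
    (fun K hKΩ hK => ?_) (fun G hGΩ hG => ?_) hf hfc hfΩ
  · exact hν.lt_top_of_isCompact hΩ (convexOn_of_tendsto hu hlim) hK hKΩ
  · simp_rw [fun k => hμ k K hK.measurableSet hKΩ, hν K hK.measurableSet hKΩ]
    exact limsup_volume_subdifferentialImage_le hΩ hu hlim hK hKΩ
  · simp_rw [fun k => hμ k G hG.measurableSet hGΩ]
    exact hν.le_liminf_volume_subdifferentialImage hΩ hu hlim hG hGΩ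

end MongeAmpere

/-- Continuity of the real Monge-Ampère operator: if convex functions `u k` converge pointwise
on `Ω` to a convex function `u`, then the Monge-Ampère measures converge weakly, i.e. tested
against any continuous function with compact support in `Ω`. -/
theorem mongeAmpere_weak_continuity {n : ℕ}
    (Ω : Set (EuclideanSpace ℝ (Fin n))) (hΩopen : IsOpen Ω) (hΩconv : Convex ℝ Ω)
    (hΩbd : Bornology.IsBounded Ω)
    (u : ℕ → EuclideanSpace ℝ (Fin n) → ℝ) (ulim : EuclideanSpace ℝ (Fin n) → ℝ)
    (hconv : ∀ k, ConvexOn ℝ Ω (u k)) (hlimconv : ConvexOn ℝ Ω ulim)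
    (hptwise : ∀ x ∈ Ω, Tendsto (fun k => u k x) atTop (nhds (ulim x)))
    (μ : ℕ → Measure (EuclideanSpace ℝ (Fin n))) (ν : Measure (EuclideanSpace ℝ (Fin n)))
    (hμ : ∀ k, ∀ E : Set (EuclideanSpace ℝ (Fin n)), MeasurableSet E → E ⊆ Ω →
      μ k E = volume (⋃ x ∈ E, gradientImage Ω (u k) x))
    (hν : ∀ E : Set (EuclideanSpace ℝ (Fin n)), MeasurableSet E → E ⊆ Ω →
      ν E = volume (⋃ x ∈ E, gradientImage Ω ulim x)) :
    ∀ f : EuclideanSpace ℝ (Fin n) → ℝ, Continuous f → HasCompactSupport f →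
      tsupport f ⊆ Ω →
      Tendsto (fun k => ∫ x, f x ∂(μ k)) atTop (nhds (∫ x, f x ∂ν)) := by
  exact fun f => mongeAmpere_weak_continuity_general hΩopen hconv hptwise hμ hν
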